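/- arXiv:2312.06508 — 3 statements merged into one kernel-verified Lean document; each statement's English description precedes it below -/
import Mathlib

section
/- (Theorem 2, linear rate under partial asynchrony and strong convexity.) In the setting of the asynchronous Prox-DGD recursion with W symmetric nonnegative stochastic, w_{ii} > 0, each f_i μ_i-strongly convex with L_i-Lipschitz gradient, each h_i proper closed convex, 0 < α < 2·min_i (w_{ii}/L_i), and partial asynchrony with constants B, D ∈ ℕ (every window {k,…,k+B} meets each K_i, and k − D ≤ s_{ij}^k ≤ k for k ∈ K_i), let x* be the unique fixed point of synchronous Prox-DGD. Then for all k ∈ ℕ, ‖x^k − x*‖_∞^b ≤ ρ^{⌊k/(B+D+1)⌋} · ‖x^0 − x*‖_∞^b, where ρ = sqrt( 1 − α·min_i ( μ_i (2 − αL_i/w_{ii}) ) ). -/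
open scoped RealInnerProductSpace

/-- A function `h : ℝ^d → ℝ ∪ {+∞}` (modeled as `EReal`-valued, never `⊥`) is proper,
closed (lower semicontinuous), and convex. -/
def ProperClosedConvex {d : ℕ} (h : EuclideanSpace ℝ (Fin d) → EReal) : Prop :=
  (∃ x, h x ≠ ⊤) ∧ (∀ x, h x ≠ ⊥) ∧ LowerSemicontinuous h ∧
    ∀ x y : EuclideanSpace ℝ (Fin d), ∀ t : ℝ, 0 ≤ t → t ≤ 1 →
      h (t • x + (1 - t) • y) ≤ (t : EReal) * h x + ((1 - t : ℝ) : EReal) * h y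

/-- `IsProxPt α h u p` says `p` minimizes `y ↦ α·h(y) + ½‖y − u‖²`, i.e.
`p = prox_{αh}(u)`. -/
def IsProxPt {d : ℕ} (α : ℝ) (h : EuclideanSpace ℝ (Fin d) → EReal)
    (u p : EuclideanSpace ℝ (Fin d)) : Prop :=
  ∀ y, (α : EReal) * h p + ((1 / 2 * ‖p - u‖ ^ 2 : ℝ) : EReal)
      ≤ (α : EReal) * h y + ((1 / 2 * ‖y - u‖ ^ 2 : ℝ) : EReal)

/-!
Proximal maps are nonexpansive, so everything rests on the forward step
`y ↦ ∑ⱼ wᵢⱼ yⱼ - α ∇fᵢ(yᵢ)`. It is the `wᵢ`-average of the blocks `yⱼ`, `j ≠ i`, and of the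
gradient step `yᵢ - (α / wᵢᵢ) ∇fᵢ(yᵢ)`. By cocoercivity of `∇fᵢ` (Baillon–Haddad), the latter
contracts squared distances by `1 - (α / wᵢᵢ) μᵢ (2 - α Lᵢ / wᵢᵢ)`, and convexity of `‖·‖²` turns
this into the factor `1 - α μᵢ (2 - α Lᵢ / wᵢᵢ) ≤ ρ²` for the whole average.

If all blocks have error at most `R` from time `N` on, then updates made from time `N + D` on only
read such blocks and so produce errors at most `ρ R`; by time `N + D + B + 1` every block has been
updated in this way.
-/

section Gradient

variable {E : Type*} [NormedAddCommGroup E] [InnerProductSpace ℝ E] [CompleteSpace E]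
  {f : E → ℝ} {f' : E → E} {L m β : ℝ}

theorem sub_sub_inner_gradient_le (hf : ∀ x, HasGradientAt f (f' x) x) {x v : E} {C : ℝ}
    (hC : ∀ t ∈ Set.Ioo (0 : ℝ) 1, ⟪f' (x + t • v) - f' x, v⟫ ≤ C * t) :
    f (x + v) - f x - ⟪f' x, v⟫ ≤ C / 2 := by
  let g : ℝ → ℝ := fun t => f (x + t • v) - t * ⟪f' x, v⟫ - C / 2 * t ^ 2
  have hg : ∀ t, HasDerivAt g (⟪f' (x + t • v) - f' x, v⟫ - C * t) t := by
    intro t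
    have hline : HasDerivAt (fun t : ℝ => x + t • v) v t := by
      simpa using ((hasDerivAt_id t).smul_const v).const_add x
    have hcomp := (hf (x + t • v)).hasFDerivAt.comp_hasDerivAt t hline
    refine ((hcomp.sub ((hasDerivAt_id t).mul_const ⟪f' x, v⟫)).sub
      (((hasDerivAt_id t).pow 2).const_mul (C / 2))).congr_deriv ?_
    simp only [InnerProductSpace.toDual_apply_apply, inner_sub_left, id_eq]
    ring
  have hanti : AntitoneOn g (Set.Icc 0 1) := by
    refine antitoneOn_of_hasDerivWithinAt_nonpos (convex_Icc 0 1)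
      (fun t _ => (hg t).continuousAt.continuousWithinAt) (fun t _ => (hg t).hasDerivWithinAt) ?_
    intro t ht
    rw [interior_Icc] at ht
    exact sub_nonpos.2 (hC t ht)
  have hends : g 1 ≤ g 0 := hanti (by simp) (by simp) zero_le_one
  simp only [g, one_smul, zero_smul, add_zero] at hends
  linarith

theorem le_add_inner_gradient_add_sq_norm (hf : ∀ x, HasGradientAt f (f' x) x)
    (hlip : ∀ x y, ‖f' x - f' y‖ ≤ L * ‖x - y‖) (x v : E) :
    f (x + v) ≤ f x + ⟪f' x, v⟫ + L / 2 * ‖v‖ ^ 2 := by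
  have hremainder := sub_sub_inner_gradient_le hf (x := x) (v := v) (C := L * ‖v‖ ^ 2) <| by
    intro t ht
    calc ⟪f' (x + t • v) - f' x, v⟫
        ≤ ‖f' (x + t • v) - f' x‖ * ‖v‖ := real_inner_le_norm _ _
      _ ≤ L * ‖x + t • v - x‖ * ‖v‖ := by gcongr; exact hlip _ _
      _ = L * ‖v‖ ^ 2 * t := by
        rw [add_sub_cancel_left, norm_smul, Real.norm_of_nonneg ht.1.le]
        ring
  linarith

theorem add_inner_gradient_le (hf : ∀ x, HasGradientAt f (f' x) x)
    (hmono : ∀ x y, 0 ≤ ⟪f' x - f' y, x - y⟫) (x v : E) : f x + ⟪f' x, v⟫ ≤ f (x + v) := by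
  have hneg : ∀ z, HasGradientAt (fun z => -f z) (-f' z) z := fun z => by
    rw [hasGradientAt_iff_hasFDerivAt, map_neg]
    exact (hf z).hasFDerivAt.neg
  have hremainder := sub_sub_inner_gradient_le hneg (x := x) (v := v) (C := 0) <| by
    intro t ht
    have hsegment := hmono (x + t • v) x
    rw [add_sub_cancel_left, inner_smul_right] at hsegment
    have := nonneg_of_mul_nonneg_right hsegment ht.1
    rw [neg_sub_neg, ← neg_sub, inner_neg_left]
    linarith
  rw [inner_neg_left] at hremainder
  linarith

-- Compare the two quadratic bounds at the gradient step `y - L⁻¹ (∇f y - ∇f x)`.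
theorem sq_norm_gradient_sub_div_le (hf : ∀ x, HasGradientAt f (f' x) x) (hL : 0 < L)
    (hmono : ∀ x y, 0 ≤ ⟪f' x - f' y, x - y⟫) (hlip : ∀ x y, ‖f' x - f' y‖ ≤ L * ‖x - y‖)
    (x y : E) : ‖f' x - f' y‖ ^ 2 / (2 * L) ≤ f y - f x - ⟪f' x, y - x⟫ := by
  set g := f' y - f' x with hg
  have hupper := le_add_inner_gradient_add_sq_norm hf hlip y (-(L⁻¹ • g))
  have hlower := add_inner_gradient_le hf hmono x (y - x + -(L⁻¹ • g))
  rw [← add_assoc, add_sub_cancel, inner_add_right] at hlower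
  have hinner : ⟪f' y, -(L⁻¹ • g)⟫ - ⟪f' x, -(L⁻¹ • g)⟫ = -(L⁻¹ * ‖g‖ ^ 2) := by
    rw [← inner_sub_left, ← hg, inner_neg_right, inner_smul_right, real_inner_self_eq_norm_sq]
  have hquad : L / 2 * ‖-(L⁻¹ • g)‖ ^ 2 = L⁻¹ * ‖g‖ ^ 2 / 2 := by
    rw [norm_neg, norm_smul, Real.norm_of_nonneg (inv_nonneg.2 hL.le)]
    field_simp
  have hdiv : ‖f' x - f' y‖ ^ 2 / (2 * L) = L⁻¹ * ‖g‖ ^ 2 / 2 := by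
    rw [norm_sub_rev, ← hg]
    field_simp
  linarith

theorem sq_norm_gradient_sub_le_mul_inner (hf : ∀ x, HasGradientAt f (f' x) x) (hL : 0 < L)
    (hmono : ∀ x y, 0 ≤ ⟪f' x - f' y, x - y⟫) (hlip : ∀ x y, ‖f' x - f' y‖ ≤ L * ‖x - y‖)
    (x y : E) : ‖f' x - f' y‖ ^ 2 ≤ L * ⟪f' x - f' y, x - y⟫ := by
  have hxy := sq_norm_gradient_sub_div_le hf hL hmono hlip x y
  have hyx := sq_norm_gradient_sub_div_le hf hL hmono hlip y x
  rw [← neg_sub x y, inner_neg_right] at hxy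
  rw [norm_sub_rev] at hyx
  rw [inner_sub_left, ← div_le_iff₀' hL]
  calc ‖f' x - f' y‖ ^ 2 / L
      = ‖f' x - f' y‖ ^ 2 / (2 * L) + ‖f' x - f' y‖ ^ 2 / (2 * L) := by field_simp; norm_num
    _ ≤ ⟪f' x, x - y⟫ - ⟪f' y, x - y⟫ := by linarith

theorem sq_norm_sub_sub_smul_gradient_sub_le (hf : ∀ x, HasGradientAt f (f' x) x)
    (hL : 0 < L) (hm : 0 ≤ m) (hstrong : ∀ x y, m * ‖x - y‖ ^ 2 ≤ ⟪f' x - f' y, x - y⟫)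
    (hlip : ∀ x y, ‖f' x - f' y‖ ≤ L * ‖x - y‖) (hβ : 0 ≤ β) (hβL : β * L ≤ 2) (x y : E) :
    ‖x - y - β • (f' x - f' y)‖ ^ 2 ≤ (1 - β * (m * (2 - β * L))) * ‖x - y‖ ^ 2 := by
  have hmono : ∀ x y, 0 ≤ ⟪f' x - f' y, x - y⟫ := fun x y =>
    (mul_nonneg hm (sq_nonneg _)).trans (hstrong x y)
  calc ‖x - y - β • (f' x - f' y)‖ ^ 2
      = ‖x - y‖ ^ 2 - 2 * β * ⟪f' x - f' y, x - y⟫ + β ^ 2 * ‖f' x - f' y‖ ^ 2 := by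
        rw [norm_sub_sq_real, inner_smul_right, norm_smul, Real.norm_of_nonneg hβ,
          real_inner_comm]
        ring
    _ ≤ ‖x - y‖ ^ 2 - 2 * β * ⟪f' x - f' y, x - y⟫
          + β ^ 2 * (L * ⟪f' x - f' y, x - y⟫) := by
        gcongr
        exact sq_norm_gradient_sub_le_mul_inner hf hL hmono hlip x y
    _ = ‖x - y‖ ^ 2 - β * (2 - β * L) * ⟪f' x - f' y, x - y⟫ := by ring
    _ ≤ ‖x - y‖ ^ 2 - β * (2 - β * L) * (m * ‖x - y‖ ^ 2) := by
        gcongr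
        exact hstrong x y
    _ = (1 - β * (m * (2 - β * L))) * ‖x - y‖ ^ 2 := by ring

end Gradient

section Prox

variable {E : Type*} [NormedAddCommGroup E] [InnerProductSpace ℝ E]

/-- Proper convex functions `E → ℝ ∪ {+∞}`, encoded as `EReal`-valued functions that avoid `⊥`. -/
structure ProperConvex (h : E → EReal) : Prop where
  exists_ne_top : ∃ x, h x ≠ ⊤
  ne_bot : ∀ x, h x ≠ ⊥
  convex : ∀ x y : E, ∀ t : ℝ, 0 ≤ t → t ≤ 1 →
    h (t • x + (1 - t) • y) ≤ (t : EReal) * h x + ((1 - t : ℝ) : EReal) * h y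

/-- The relation `p = prox_{αh}(u)`, extending `IsProxPt` to arbitrary inner product spaces. -/
def IsProxPoint (α : ℝ) (h : E → EReal) (u p : E) : Prop :=
  ∀ y, (α : EReal) * h p + ((1 / 2 * ‖p - u‖ ^ 2 : ℝ) : EReal)
      ≤ (α : EReal) * h y + ((1 / 2 * ‖y - u‖ ^ 2 : ℝ) : EReal)

variable {α : ℝ} {h : E → EReal} {u v p q : E}

theorem IsProxPoint.ne_top (hp : IsProxPoint α h u p) (hα : 0 < α) (hh : ProperConvex h) :
    h p ≠ ⊤ := by
  intro hp_top
  obtain ⟨z, hz⟩ := hh.exists_ne_top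
  have hle := hp z
  rw [hp_top, EReal.coe_mul_top_of_pos hα, EReal.top_add_coe,
    ← EReal.coe_toReal hz (hh.ne_bot z), ← EReal.coe_mul, ← EReal.coe_add] at hle
  exact EReal.coe_ne_top _ (top_le_iff.1 hle)

theorem IsProxPoint.inner_sub_le (hp : IsProxPoint α h u p) (hα : 0 < α) (hh : ProperConvex h)
    (hq : h q ≠ ⊤) : ⟪u - p, q - p⟫ ≤ α * ((h q).toReal - (h p).toReal) := by
  have hhp := EReal.coe_toReal (hp.ne_top hα hh) (hh.ne_bot p)
  have hhq := EReal.coe_toReal hq (hh.ne_bot q)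
  set a := (h p).toReal
  set b := (h q).toReal
  -- Minimality of `p` along the segment towards `q`; the claim is the limit `t → 0`.
  have hsegment : ∀ t ∈ Set.Ioc (0 : ℝ) 1,
      ⟪u - p, q - p⟫ ≤ α * (b - a) + t * (1 / 2 * ‖q - p‖ ^ 2) := by
    rintro t ⟨ht0, ht1⟩
    have hconv := mul_le_mul_of_nonneg_left (hh.convex q p t ht0.le ht1)
      (EReal.coe_nonneg.2 hα.le)
    have hmin := (hp (t • q + (1 - t) • p)).trans (add_le_add_left hconv _)
    rw [← hhp, ← hhq] at hmin
    norm_cast at hmin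
    have hexpand : t • q + (1 - t) • p - u = t • (q - p) - (u - p) := by module
    rw [hexpand, norm_sub_sq_real (t • (q - p)), real_inner_smul_left, real_inner_comm,
      norm_smul, Real.norm_of_nonneg ht0.le, norm_sub_rev p u] at hmin
    refine le_of_mul_le_mul_left ?_ ht0
    linarith
  have hlim : Filter.Tendsto (fun t : ℝ => α * (b - a) + t * (1 / 2 * ‖q - p‖ ^ 2))
      (nhdsWithin 0 (Set.Ioi 0)) (nhds (α * (b - a))) := by
    refine tendsto_nhdsWithin_of_tendsto_nhds (Continuous.tendsto' ?_ _ _ ?_)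
    · fun_prop
    · ring
  exact ge_of_tendsto hlim (Filter.mem_of_superset (Ioc_mem_nhdsGT zero_lt_one) hsegment)

theorem IsProxPoint.norm_sub_le (hp : IsProxPoint α h u p) (hq : IsProxPoint α h v q)
    (hα : 0 < α) (hh : ProperConvex h) : ‖p - q‖ ≤ ‖u - v‖ := by
  have hpq := hp.inner_sub_le hα hh (hq.ne_top hα hh)
  have hqp := hq.inner_sub_le hα hh (hp.ne_top hα hh)
  have hsum : ⟪u - p, q - p⟫ + ⟪v - q, p - q⟫ = ‖p - q‖ ^ 2 - ⟪u - v, p - q⟫ := by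
    rw [← real_inner_self_eq_norm_sq, ← neg_sub p q, inner_neg_right, ← inner_neg_left,
      ← inner_add_left, ← inner_sub_left]
    congr 1
    abel
  have hfirm : ‖p - q‖ * ‖p - q‖ ≤ ‖u - v‖ * ‖p - q‖ := by
    linarith [real_inner_le_norm (u - v) (p - q)]
  rcases (norm_nonneg (p - q)).eq_or_lt with hzero | hpos
  · exact hzero ▸ norm_nonneg _
  · exact le_of_mul_le_mul_right hfirm hpos

end Prox

section ForwardStep

variable {ι : Type*} [Fintype ι]

theorem sq_norm_sum_smul_sub_smul_le {E : Type*} [SeminormedAddCommGroup E] [NormedSpace ℝ E]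
    {w : ι → ℝ} (hw : ∀ j, 0 ≤ w j) (hsum : ∑ j, w j = 1)
    {i : ι} {v : ι → E} {u : E} {c R : ℝ} (hv : ∀ j, ‖v j‖ ≤ R)
    (hu : ‖v i - u‖ ^ 2 ≤ (1 - c) * R ^ 2) :
    ‖∑ j, w j • v j - w i • u‖ ^ 2 ≤ (1 - w i * c) * R ^ 2 := by
  classical
  have hconv : ConvexOn ℝ Set.univ fun z : E => ‖z‖ ^ 2 :=
    convexOn_univ_norm.pow (fun _ _ => norm_nonneg _) 2
  let b : ι → E := v - Pi.single i u
  let δ : ι → ℝ := Pi.single i (c * R ^ 2)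
  have hb : ∀ j, ‖b j‖ ^ 2 ≤ R ^ 2 - δ j := by
    intro j
    rcases eq_or_ne j i with rfl | hji
    · simpa [b, δ, sub_mul] using hu
    · simpa [b, δ, hji] using pow_le_pow_left₀ (norm_nonneg _) (hv j) 2
  calc ‖∑ j, w j • v j - w i • u‖ ^ 2
      = ‖∑ j, w j • b j‖ ^ 2 := by
        simp [b, smul_sub, Finset.sum_sub_distrib, Pi.single_apply]
    _ ≤ ∑ j, w j * ‖b j‖ ^ 2 := by
        simpa using hconv.map_sum_le (t := Finset.univ) (fun j _ => hw j) hsum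
          (fun j _ => Set.mem_univ (b j))
    _ ≤ ∑ j, w j * (R ^ 2 - δ j) := by
        gcongr with j
        · exact hw j
        · exact hb j
    _ = (1 - w i * c) * R ^ 2 := by
        simp only [δ, mul_sub, Finset.sum_sub_distrib, ← Finset.sum_mul, hsum, Pi.single_apply,
          mul_ite, mul_zero, Finset.sum_ite_eq', Finset.mem_univ, if_true]
        ring

section Module

variable {E : Type*} [AddCommGroup E] [Module ℝ E]

/-- The point `∑ⱼ wⱼ yⱼ - α ∇f(yᵢ)` to which agent `i` of Prox-DGD applies its proximal map;
`w` is the `i`-th row of the mixing matrix. -/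
def forwardStep (w : ι → ℝ) (α : ℝ) (f' : E → E) (i : ι) (y : ι → E) : E :=
  ∑ j, w j • y j - α • f' (y i)

theorem forwardStep_sub_forwardStep {w : ι → ℝ} {i : ι} (hwi : w i ≠ 0) (α : ℝ) (f' : E → E)
    (y z : ι → E) : forwardStep w α f' i y - forwardStep w α f' i z =
      ∑ j, w j • (y - z) j - w i • ((α / w i) • (f' (y i) - f' (z i))) := by
  simp only [forwardStep, Pi.sub_apply, smul_sub, Finset.sum_sub_distrib, smul_smul,
    mul_div_cancel₀ α hwi]
  abel

end Module

theorem norm_forwardStep_sub_le {E : Type*} [NormedAddCommGroup E] [InnerProductSpace ℝ E]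
    [CompleteSpace E] {w : ι → ℝ} (hw : ∀ j, 0 ≤ w j) (hsum : ∑ j, w j = 1) {i : ι}
    (hwi : 0 < w i) {f : E → ℝ} {f' : E → E} (hf : ∀ x, HasGradientAt f (f' x) x)
    {m L : ℝ} (hm : 0 ≤ m) (hL : 0 < L)
    (hstrong : ∀ x y, m * ‖x - y‖ ^ 2 ≤ ⟪f' x - f' y, x - y⟫)
    (hlip : ∀ x y, ‖f' x - f' y‖ ≤ L * ‖x - y‖)
    {α : ℝ} (hα : 0 ≤ α) (hαL : α * L / w i ≤ 2) (y z : ι → E) :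
    ‖forwardStep w α f' i y - forwardStep w α f' i z‖
      ≤ √(1 - α * (m * (2 - α * L / w i))) * ‖y - z‖ := by
  rcases subsingleton_or_nontrivial E with hE | hE
  · rw [Subsingleton.elim (_ - _ : E) 0, norm_zero]
    positivity
  set c := α / w i * (m * (2 - α / w i * L)) with hc
  have hstep := sq_norm_sub_sub_smul_gradient_sub_le hf hL hm hstrong hlip
    (div_nonneg hα hwi.le) (by rwa [div_mul_eq_mul_div])
  have one_sub_c_nonneg : 0 ≤ 1 - c := by
    obtain ⟨e, he⟩ := exists_ne (0 : E)
    have hscaled := (sq_nonneg _).trans (hstep e 0)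
    rw [sub_zero] at hscaled
    exact nonneg_of_mul_nonneg_left hscaled (by positivity)
  have hblock : ‖(y - z) i - (α / w i) • (f' (y i) - f' (z i))‖ ^ 2 ≤ (1 - c) * ‖y - z‖ ^ 2 :=
    calc ‖(y - z) i - (α / w i) • (f' (y i) - f' (z i))‖ ^ 2
        ≤ (1 - c) * ‖(y - z) i‖ ^ 2 := hstep (y i) (z i)
      _ ≤ (1 - c) * ‖y - z‖ ^ 2 := by
        gcongr
        exact norm_le_pi_norm (y - z) i
  have hsq := sq_norm_sum_smul_sub_smul_le hw hsum (norm_le_pi_norm (y - z)) hblock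
  have hwc : w i * c = α * (m * (2 - α * L / w i)) := by
    rw [hc]
    field_simp
  rw [← forwardStep_sub_forwardStep hwi.ne', hwc] at hsq
  simpa only [Real.sqrt_mul' _ (sq_nonneg ‖y - z‖), Real.sqrt_sq (norm_nonneg (y - z))]
    using Real.le_sqrt_of_sq_le hsq

end ForwardStep

section Asynchrony

variable {ι : Type*} {K : ι → Set ℕ} {s : ι → ι → ℕ → ℕ} {B D : ℕ}

/-- Partial asynchrony: `K i` is the set of update times of agent `i`, and the update at time `k`
reads the block of agent `j` as it was at time `s i j k`. The lower bound on `s i j k` uses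
truncated subtraction, so it is void for `k ≤ D`. -/
structure PartiallyAsynchronous (K : ι → Set ℕ) (s : ι → ι → ℕ → ℕ) (B D : ℕ) : Prop where
  exists_update : ∀ i k, ∃ l, k ≤ l ∧ l ≤ k + B ∧ l ∈ K i
  read_le : ∀ i j k, k ∈ K i → s i j k ≤ k
  le_read : ∀ i j k, k ∈ K i → k - D ≤ s i j k

/-- Error sequences of asynchronous iterations: `e k i` is the error of block `i` at time `k`, and
every update contracts the largest error it reads by the factor `ρ`. -/
structure AsyncContracting (K : ι → Set ℕ) (s : ι → ι → ℕ → ℕ) (ρ : ℝ) (e : ℕ → ι → ℝ) :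
    Prop where
  update_le : ∀ i k R, k ∈ K i → (∀ j, e (s i j k) j ≤ R) → e (k + 1) i ≤ ρ * R
  keep_le : ∀ i k, k ∉ K i → e (k + 1) i ≤ e k i

namespace AsyncContracting

variable {ρ R : ℝ} {e : ℕ → ι → ℝ}

theorem le_of_initial_le (he : AsyncContracting K s ρ e)
    (hread : ∀ i j k, k ∈ K i → s i j k ≤ k) (hρ : ρ ≤ 1) (hR : 0 ≤ R)
    (hinit : ∀ i, e 0 i ≤ R) (k : ℕ) (i : ι) : e k i ≤ R := by
  induction k using Nat.strong_induction_on generalizing i with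
  | _ k ih =>
    rcases k with _ | k
    · exact hinit i
    by_cases hk : k ∈ K i
    · calc e (k + 1) i
          ≤ ρ * R := he.update_le i k R hk fun j => ih _ (Nat.lt_succ_of_le (hread i j k hk)) j
        _ ≤ R := mul_le_of_le_one_left hR hρ
    · exact (he.keep_le i k hk).trans (ih k k.lt_succ_self i)

theorem le_mul_of_forall_ge_le (he : AsyncContracting K s ρ e)
    (hasync : PartiallyAsynchronous K s B D) {N : ℕ} (hN : ∀ k, N ≤ k → ∀ i, e k i ≤ R)
    {k : ℕ} (hk : N + (B + D + 1) ≤ k) (i : ι) : e k i ≤ ρ * R := by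
  have hupdate : ∀ l, N + D ≤ l → l ∈ K i → e (l + 1) i ≤ ρ * R := fun l hl hlK =>
    he.update_le i l R hlK fun j => hN _ (by have := hasync.le_read i j l hlK; omega) j
  obtain ⟨l, hNl, hlB, hlK⟩ := hasync.exists_update i (N + D)
  have hlk : l + 1 ≤ k := by omega
  clear hk
  induction k, hlk using Nat.le_induction with
  | base => exact hupdate l hNl hlK
  | succ k hlk ih =>
    by_cases hkK : k ∈ K i
    · exact hupdate k (by omega) hkK
    · exact (he.keep_le i k hkK).trans ih

theorem le_pow_mul (he : AsyncContracting K s ρ e) (hasync : PartiallyAsynchronous K s B D)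
    (hρ : ρ ≤ 1) (hR : 0 ≤ R) (hinit : ∀ i, e 0 i ≤ R) (m : ℕ) :
    ∀ k, m * (B + D + 1) ≤ k → ∀ i, e k i ≤ ρ ^ m * R := by
  induction m with
  | zero =>
    intro k _ i
    simpa using he.le_of_initial_le hasync.read_le hρ hR hinit k i
  | succ m ih =>
    intro k hk i
    rw [pow_succ', mul_assoc]
    exact he.le_mul_of_forall_ge_le hasync ih (by rwa [← Nat.succ_mul]) i

end AsyncContracting

end Asynchrony

theorem pi_norm_eq_iSup {ι E : Type*} [Fintype ι] [SeminormedAddCommGroup E] (x : ι → E) :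
    ‖x‖ = ⨆ i, ‖x i‖ := by
  rw [Pi.norm_def, Finset.sup_univ_eq_ciSup, NNReal.coe_iSup]
  rfl

theorem stmt13_general {ι E : Type*} [Fintype ι] [Nonempty ι] [NormedAddCommGroup E]
    [InnerProductSpace ℝ E] [CompleteSpace E]
    {W : ι → ι → ℝ} (hWnonneg : ∀ i j, 0 ≤ W i j) (hWstoch : ∀ i, ∑ j, W i j = 1)
    (hWdiag : ∀ i, 0 < W i i)
    {f : ι → E → ℝ} {f' : ι → E → E} (hgrad : ∀ i x, HasGradientAt (f i) (f' i x) x)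
    {μ : ι → ℝ} (hμ : ∀ i, 0 ≤ μ i)
    (hsc : ∀ i x y, μ i * ‖x - y‖ ^ 2 ≤ ⟪f' i x - f' i y, x - y⟫)
    {L : ι → ℝ} (hL : ∀ i, 0 < L i) (hlip : ∀ i x y, ‖f' i x - f' i y‖ ≤ L i * ‖x - y‖)
    {h : ι → E → EReal} (hh : ∀ i, ProperConvex (h i))
    {α : ℝ} (hα0 : 0 < α) (hα1 : ∀ i, α ≤ 2 * (W i i / L i))
    {x : ℕ → ι → E} {K : ι → Set ℕ} {s : ι → ι → ℕ → ℕ} {B D : ℕ}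
    (hasync : PartiallyAsynchronous K s B D) (hs_self : ∀ i k, s i i k = k)
    (hupd : ∀ i k, k ∈ K i →
      IsProxPoint α (h i) (∑ j, W i j • x (s i j k) j - α • f' i (x k i)) (x (k + 1) i))
    (hkeep : ∀ i k, k ∉ K i → x (k + 1) i = x k i)
    {xstar : ι → E}
    (hfix : ∀ i, IsProxPoint α (h i) (∑ j, W i j • xstar j - α • f' i (xstar i)) (xstar i))
    (k : ℕ) :
    ‖x k - xstar‖ ≤ √(1 - α * ⨅ i, μ i * (2 - α * L i / W i i)) ^ (k / (B + D + 1))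
      * ‖x 0 - xstar‖ := by
  set ρ := √(1 - α * ⨅ i, μ i * (2 - α * L i / W i i)) with hρ
  have hαL : ∀ i, α * L i / W i i ≤ 2 := fun i => by
    rw [div_le_iff₀ (hWdiag i), ← le_div_iff₀ (hL i), mul_div_assoc]
    exact hα1 i
  have hρ_le_one : ρ ≤ 1 := by
    have hrate : ∀ i, 0 ≤ μ i * (2 - α * L i / W i i) := fun i =>
      mul_nonneg (hμ i) (sub_nonneg.2 (hαL i))
    rw [hρ, Real.sqrt_le_one]
    exact sub_le_self 1 (mul_nonneg hα0.le (Real.iInf_nonneg hrate))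
  have hsqrt_le : ∀ i, √(1 - α * (μ i * (2 - α * L i / W i i))) ≤ ρ := fun i => by
    rw [hρ]
    gcongr
    exact ciInf_le (Set.finite_range _).bddBelow i
  have hcontr : AsyncContracting K s ρ fun k i => ‖x k i - xstar i‖ :=
    { update_le := fun i k R hk hR => by
        let y : ι → E := fun j => x (s i j k) j
        have hprox : IsProxPoint α (h i) (forwardStep (W i) α (f' i) i y) (x (k + 1) i) := by
          simpa only [forwardStep, y, hs_self] using hupd i k hk
        calc ‖x (k + 1) i - xstar i‖
            ≤ ‖forwardStep (W i) α (f' i) i y - forwardStep (W i) α (f' i) i xstar‖ :=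
              hprox.norm_sub_le (hfix i) hα0 (hh i)
          _ ≤ √(1 - α * (μ i * (2 - α * L i / W i i))) * ‖y - xstar‖ :=
              norm_forwardStep_sub_le (hWnonneg i) (hWstoch i) (hWdiag i) (hgrad i) (hμ i) (hL i)
                (hsc i) (hlip i) hα0.le (hαL i) y xstar
          _ ≤ ρ * R := by
              gcongr
              · exact hsqrt_le i
              · exact (pi_norm_le_iff_of_nonempty _).2 hR
      keep_le := fun i k hk => by rw [hkeep i k hk] }
  exact (pi_norm_le_iff_of_nonempty _).2 <| hcontr.le_pow_mul hasync hρ_le_one (norm_nonneg _)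
    (norm_le_pi_norm (x 0 - xstar)) _ k (Nat.div_mul_le_self k _)

/-- **Theorem 2, linear rate under partial asynchrony and strong
convexity.** With `ρ = √(1 − α·minᵢ (μᵢ(2 − αLᵢ/wᵢᵢ)))` and partial asynchrony
constants `B, D`, the asynchronous Prox-DGD iterates satisfy
`‖x^k − x⋆‖∞ᵇ ≤ ρ^⌊k/(B+D+1)⌋·‖x⁰ − x⋆‖∞ᵇ` in the block-maximum norm. -/
theorem stmt13 (n d : ℕ) (hn : 0 < n)
    (W : Fin n → Fin n → ℝ)
    (hWsymm : ∀ i j, W i j = W j i)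
    (hWnonneg : ∀ i j, 0 ≤ W i j)
    (hWstoch : ∀ i, ∑ j, W i j = 1)
    (hWdiag : ∀ i, 0 < W i i)
    (f : Fin n → EuclideanSpace ℝ (Fin d) → ℝ)
    (f' : Fin n → EuclideanSpace ℝ (Fin d) → EuclideanSpace ℝ (Fin d))
    (hgrad : ∀ i x, HasGradientAt (f i) (f' i x) x)
    (μ : Fin n → ℝ) (hμ : ∀ i, 0 < μ i)
    (hsc : ∀ i x y, μ i * ‖x - y‖ ^ 2 ≤ ⟪f' i x - f' i y, x - y⟫)
    (L : Fin n → ℝ) (hL : ∀ i, 0 < L i)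
    (hlip : ∀ i x y, ‖f' i x - f' i y‖ ≤ L i * ‖x - y‖)
    (h : Fin n → EuclideanSpace ℝ (Fin d) → EReal)
    (hh : ∀ i, ProperClosedConvex (h i))
    (α : ℝ) (hα0 : 0 < α) (hα1 : ∀ i, α < 2 * (W i i / L i))
    -- the asynchronous iterates, activation sets, and delayed indices
    (x : ℕ → Fin n → EuclideanSpace ℝ (Fin d))
    (K : Fin n → Set ℕ)
    (s : Fin n → Fin n → ℕ → ℕ)
    (hs_le : ∀ i j k, s i j k ≤ k)
    (hs_self : ∀ i k, s i i k = k)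
    -- the asynchronous Prox-DGD recursion
    (hupd : ∀ i k, k ∈ K i →
      IsProxPt α (h i) ((∑ j, W i j • x (s i j k) j) - α • f' i (x k i)) (x (k + 1) i))
    (hkeep : ∀ i k, k ∉ K i → x (k + 1) i = x k i)
    -- partial asynchrony with constants B and D
    (B D : ℕ)
    (hB : ∀ i k, ∃ l, k ≤ l ∧ l ≤ k + B ∧ l ∈ K i)
    (hD : ∀ i j k, k ∈ K i → k - D ≤ s i j k)
    -- `x⋆` is the (unique) fixed point of synchronous Prox-DGD
    (xstar : Fin n → EuclideanSpace ℝ (Fin d))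
    (hfix : ∀ i, IsProxPt α (h i)
      ((∑ j, W i j • xstar j) - α • f' i (xstar i)) (xstar i)) :
    ∀ k : ℕ,
      (⨆ i, ‖x k i - xstar i‖)
        ≤ Real.sqrt (1 - α * ⨅ i, μ i * (2 - α * L i / W i i)) ^ (k / (B + D + 1))
            * ⨆ i, ‖x 0 i - xstar i‖ := by
  have : Nonempty (Fin n) := Fin.pos_iff_nonempty.1 hn
  simpa only [pi_norm_eq_iSup, Pi.sub_apply] using stmt13_general hWnonneg hWstoch hWdiag hgrad
    (fun i => (hμ i).le) hsc hL hlip (fun i => ⟨(hh i).1, (hh i).2.1, (hh i).2.2.2⟩) hα0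
    (fun i => (hα1 i).le) ⟨hB, fun i j k _ => hs_le i j k, hD⟩ hs_self hupd hkeep hfix
end

section
/- (Lemma 3, existence part.) Let each f_i : ℝ^d → ℝ be convex with L_i-Lipschitz gradient and bounded below, suppose the optimal solution set of min_{z∈ℝ^d} Σ_i f_i(z) is nonempty and bounded, and let W ∈ ℝ^{n×n} be symmetric, entrywise nonnegative, stochastic, and positive definite, with ‖Wv‖ ≤ β‖v‖ for all v ⟂ 𝟙 and β ∈ [0,1). Then for every α > 0 the DGD-ATC map T(x) = 𝐖(x − α∇f(x)) has a fixed point; equivalently, the function x ↦ Σ_i f_i(x_i) + (1/(2α))⟨x, (𝐖^{-1} − I)x⟩ attains its minimum over (ℝ^d)^n. -/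
open scoped RealInnerProductSpace

/-!
Write `𝐐 = 𝐖⁻¹ - I = (I - 𝐖) + 𝐐𝐖𝐐`. Both summands are positive semidefinite, and `𝐐` annihilates
exactly the consensus vectors `(z, …, z)`. Factoring `𝐐 = 𝐑ᵀ𝐑`, the penalized objective is a convex
function plus a multiple of `‖𝐑x‖²`. A convex function decreases at most linearly along a ray, so a
recession direction `u` of the sum must satisfy `𝐑u = 0`, that is, `u` is a consensus vector. It is
then a recession direction of `z ↦ ∑ᵢ fᵢ(z)` at a minimizer, and vanishes because the set of
minimizers is bounded. A convex function on a finite-dimensional space without recession directions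
attains its minimum. At a minimizer `x` the stationarity condition `α∇f(x) = -𝐐x` reads
`𝐖(x - α∇f(x)) = 𝐖𝐖⁻¹x = x`.
-/

section Recession

open Filter Bornology

variable {V : Type*} [NormedAddCommGroup V] [NormedSpace ℝ V]

lemma eq_zero_of_forall_add_smul_mem_of_isBounded {s : Set V} (hs : IsBounded s) {x u : V}
    (hray : ∀ t : ℝ, 0 ≤ t → x + t • u ∈ s) : u = 0 := by
  have hray_tendsto : Tendsto (fun t : ℝ => t • u +ᵥ x) atTop
      (AffineSpace.asymptoticNhds ℝ V u) :=
    (tendsto_id.atTop_smul_const_tendsto_asymptoticNhds u).asymptoticNhds_vadd_const x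
  have hu : u ∈ asymptoticCone ℝ s := by
    refine hray_tendsto.frequently (Eventually.frequently ?_)
    filter_upwards [eventually_ge_atTop 0] with t ht
    simpa only [vadd_eq_add, add_comm] using hray t ht
  exact asymptoticCone_subset_singleton_of_bounded hs hu

lemma exists_forall_le_of_convexOn_of_no_recession [FiniteDimensional ℝ V] {F : V → ℝ}
    (hF : ConvexOn ℝ Set.univ F) {x : V}
    (hx : ∀ u, (∀ t : ℝ, 0 ≤ t → F (x + t • u) ≤ F x) → u = 0) :
    ∃ x₀, ∀ y, F x₀ ≤ F y := by
  have : ProperSpace V := FiniteDimensional.proper ℝ V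
  have hcont : Continuous F := continuousOn_univ.1 (hF.continuousOn isOpen_univ)
  have hconvex : Convex ℝ {y | F y ≤ F x} := by simpa using hF.convex_le (F x)
  have hclosed : IsClosed {y | F y ≤ F x} := isClosed_le hcont continuous_const
  refine hcont.exists_forall_le_of_isBounded x ?_
  refine isBounded_iff_asymptoticCone_subset_singleton.2 fun u hu => hx u fun t ht => ?_
  simpa [add_comm] using
    hconvex.smul_vadd_mem_of_isClosed_of_mem_asymptoticCone hclosed ht hu (le_refl (F x))

end Recession

section ConvexOn

variable {V : Type*} [AddCommGroup V] [Module ℝ V] {G : V → ℝ}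

lemma add_mul_sub_le_of_convexOn (hG : ConvexOn ℝ Set.univ G) (x u : V) {t : ℝ} (ht : 0 ≤ t) :
    G x + t * (G x - G (x - u)) ≤ G (x + t • u) := by
  have hpos : 0 < 1 + t := by positivity
  have hweights : t / (1 + t) + 1 / (1 + t) = 1 := by rw [← add_div, add_comm t, div_self hpos.ne']
  have hcomb : (t / (1 + t)) • (x - u) + (1 / (1 + t)) • (x + t • u) = x := by
    match_scalars <;> field_simp <;> ring
  have hle : G x ≤ t / (1 + t) * G (x - u) + 1 / (1 + t) * G (x + t • u) := by
    simpa only [hcomb, smul_eq_mul] using hG.2 (Set.mem_univ (x - u)) (Set.mem_univ (x + t • u))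
      (by positivity) (by positivity) hweights
  field_simp at hle
  linarith

lemma nonpos_of_convexOn_of_forall_add_mul_sq_le (hG : ConvexOn ℝ Set.univ G) {x u : V} {q : ℝ}
    (h : ∀ t : ℝ, 0 ≤ t → G (x + t • u) + q * t ^ 2 ≤ G x) : q ≤ 0 := by
  by_contra! hq
  set K := G (x - u) - G x
  have ht : 0 < (|K| + 1) / q := by positivity
  have hlower := add_mul_sub_le_of_convexOn hG x u ht.le
  have hmul : q * ((|K| + 1) / q) ≤ K := by
    refine le_of_mul_le_mul_right ?_ ht
    linarith [h _ ht.le]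
  rw [mul_div_cancel₀ _ hq.ne'] at hmul
  linarith [le_abs_self K]

lemma convexOn_add_mul_norm_sq (hG : ConvexOn ℝ Set.univ G) {H : Type*}
    [SeminormedAddCommGroup H] [NormedSpace ℝ H] (B : V →ₗ[ℝ] H) {c : ℝ} (hc : 0 ≤ c) :
    ConvexOn ℝ Set.univ fun x => G x + c * ‖B x‖ ^ 2 := by
  have hnorm : ConvexOn ℝ Set.univ fun x => ‖B x‖ := convexOn_univ_norm.comp_linearMap B
  exact hG.add ((hnorm.pow (fun _ _ => norm_nonneg _) 2).smul hc)

end ConvexOn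

section SeparableSum

variable {ι V : Type*} [Fintype ι] [AddCommMonoid V] [Module ℝ V]

lemma convexOn_sum_comp_eval {f : ι → V → ℝ} (hf : ∀ i, ConvexOn ℝ Set.univ (f i)) :
    ConvexOn ℝ Set.univ fun x : ι → V => ∑ i, f i (x i) := by
  refine ⟨convex_univ, fun x _ y _ a b ha hb hab => ?_⟩
  simp only [smul_eq_mul, Finset.mul_sum, ← Finset.sum_add_distrib]
  exact Finset.sum_le_sum fun i _ => (hf i).2 trivial trivial ha hb hab

end SeparableSum

section Penalty

variable {V H : Type*} [NormedAddCommGroup V] [NormedSpace ℝ V]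
  [NormedAddCommGroup H] [NormedSpace ℝ H]

lemma exists_forall_add_mul_norm_sq_le [FiniteDimensional ℝ V] {G : V → ℝ}
    (hG : ConvexOn ℝ Set.univ G) (B : V →ₗ[ℝ] H) {c : ℝ} (hc : 0 < c)
    (hne : {x | B x = 0 ∧ ∀ y, B y = 0 → G x ≤ G y}.Nonempty)
    (hbdd : Bornology.IsBounded {x | B x = 0 ∧ ∀ y, B y = 0 → G x ≤ G y}) :
    ∃ x₀, ∀ x, G x₀ + c * ‖B x₀‖ ^ 2 ≤ G x + c * ‖B x‖ ^ 2 := by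
  obtain ⟨z, hBz, hz⟩ := hne
  refine exists_forall_le_of_convexOn_of_no_recession (x := z)
    (convexOn_add_mul_norm_sq hG B hc.le) fun u hu => ?_
  have hray : ∀ t : ℝ, 0 ≤ t → G (z + t • u) + c * ‖B u‖ ^ 2 * t ^ 2 ≤ G z := fun t ht => by
    have := hu t ht
    simp only [map_add, map_smul, hBz, zero_add, norm_smul, Real.norm_of_nonneg ht, norm_zero]
      at this
    linarith
  have hBu : B u = 0 := by
    have := nonpos_of_convexOn_of_forall_add_mul_sq_le hG hray
    simpa using nonpos_of_mul_nonpos_right this hc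
  refine eq_zero_of_forall_add_smul_mem_of_isBounded hbdd (x := z) fun t ht =>
    ⟨by simp [hBz, hBu], fun y hy => le_trans ?_ (hz y hy)⟩
  simpa [hBu] using hray t ht

end Penalty

section BlockAction

open scoped Matrix.Module

variable {ι E : Type*} [Fintype ι] [DecidableEq ι] [AddCommGroup E] [Module ℝ E]

lemma matrix_smul_const (A : Matrix ι ι ℝ) (z : E) :
    A • (fun _ : ι => z) = fun i => (∑ j, A i j) • z := by
  ext i
  simp [Finset.sum_smul]

lemma inv_sub_one_smul_eq_zero_iff {W : Matrix ι ι ℝ} (hdet : IsUnit W.det) (x : ι → E) :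
    (W⁻¹ - 1) • x = 0 ↔ W • x = x := by
  rw [sub_smul, one_smul, sub_eq_zero]
  constructor <;> intro h
  · nth_rw 1 [← h, smul_smul, Matrix.mul_nonsing_inv _ hdet, one_smul]
  · nth_rw 1 [← h, smul_smul, Matrix.nonsing_inv_mul _ hdet, one_smul]

end BlockAction

section PenalizedSum

open scoped Matrix Matrix.Module MatrixOrder

variable {ι E : Type*} [Fintype ι] [DecidableEq ι] [NormedAddCommGroup E] [InnerProductSpace ℝ E]

lemma sum_inner_matrix_smul_right (A : Matrix ι ι ℝ) (x y : ι → E) :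
    ∑ i, ⟪x i, (A • y) i⟫ = ∑ i, ⟪(Aᵀ • x) i, y i⟫ := by
  simp only [Matrix.Module.smul_apply, inner_sum, sum_inner, inner_smul_right, inner_smul_left,
    Matrix.transpose_apply]
  exact Finset.sum_comm

lemma sum_inner_transpose_mul_self_smul (R : Matrix ι ι ℝ) (x : ι → E) :
    ∑ i, ⟪x i, ((Rᵀ * R) • x) i⟫ = ‖WithLp.toLp 2 (R • x)‖ ^ 2 := by
  simp only [mul_smul, sum_inner_matrix_smul_right, Matrix.transpose_transpose,
    PiLp.norm_sq_eq_of_L2, real_inner_self_eq_norm_sq]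

lemma transpose_mul_self_smul_eq_zero_iff (R : Matrix ι ι ℝ) (x : ι → E) :
    (Rᵀ * R) • x = 0 ↔ R • x = 0 := by
  refine ⟨fun h => ?_, fun h => by rw [mul_smul, h, smul_zero]⟩
  have hnorm : ‖WithLp.toLp 2 (R • x)‖ ^ 2 = 0 := by
    simp only [← sum_inner_transpose_mul_self_smul, h, Pi.zero_apply, inner_zero_right,
      Finset.sum_const_zero]
  exact (WithLp.toLp_eq_zero 2).1 (norm_eq_zero.1 (pow_eq_zero_iff two_ne_zero |>.1 hnorm))

/-- The penalized objective `x ↦ ∑ᵢ fᵢ(xᵢ) + c ⟨x, 𝐐x⟩` on `Eⁿ`, where `𝐐 = Q ⊗ I` is the blockwise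
action `Q • x` of the matrix `Q`; DGD-ATC with step size `α` corresponds to `c = 1 / (2α)` and
`Q = W⁻¹ - 1`. -/
noncomputable def penalizedSum (f : ι → E → ℝ) (c : ℝ) (Q : Matrix ι ι ℝ) (x : ι → E) : ℝ :=
  ∑ i, f i (x i) + c * ∑ i, ⟪x i, (Q • x) i⟫

theorem exists_forall_penalizedSum_le [FiniteDimensional ℝ E] {f : ι → E → ℝ}
    (hf : ∀ i, ConvexOn ℝ Set.univ (f i)) {c : ℝ} (hc : 0 < c) {Q : Matrix ι ι ℝ}
    (hQ : Q.PosSemidef) (hker : ∀ x : ι → E, Q • x = 0 ↔ ∃ z, x = fun _ => z)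
    (hne : {z | ∀ y, ∑ i, f i z ≤ ∑ i, f i y}.Nonempty)
    (hbdd : Bornology.IsBounded {z | ∀ y, ∑ i, f i z ≤ ∑ i, f i y}) :
    ∃ x₀, ∀ x, penalizedSum f c Q x₀ ≤ penalizedSum f c Q x := by
  obtain ⟨R, rfl⟩ : ∃ R : Matrix ι ι ℝ, Q = Rᵀ * R := by
    simpa only [Matrix.star_eq_conjTranspose, Matrix.conjTranspose_eq_transpose_of_trivial] using
      CStarAlgebra.nonneg_iff_eq_star_mul_self.1 hQ.nonneg
  let B : (ι → E) →ₗ[ℝ] PiLp 2 fun _ : ι => E :=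
    (WithLp.linearEquiv 2 ℝ (ι → E)).symm.toLinearMap ∘ₗ Algebra.lsmul ℝ ℝ (ι → E) R
  have hB : ∀ x, B x = 0 ↔ ∃ z, x = fun _ => z := fun x => by
    rw [← hker, transpose_mul_self_smul_eq_zero_iff]
    exact WithLp.toLp_eq_zero 2
  have hargmin : {x | B x = 0 ∧ ∀ y, B y = 0 → ∑ i, f i (x i) ≤ ∑ i, f i (y i)} =
      Function.const ι '' {z | ∀ y, ∑ i, f i z ≤ ∑ i, f i y} := by
    ext x
    simp only [hB]
    constructor
    · rintro ⟨⟨z, rfl⟩, hz⟩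
      exact ⟨z, fun y => hz _ ⟨y, rfl⟩, rfl⟩
    · rintro ⟨z, hz, rfl⟩
      refine ⟨⟨z, rfl⟩, ?_⟩
      rintro _ ⟨y, rfl⟩
      exact hz y
  obtain ⟨x₀, hx₀⟩ := exists_forall_add_mul_norm_sq_le (convexOn_sum_comp_eval hf) B hc
    (hargmin ▸ hne.image _)
    (hargmin ▸ (LipschitzWith.mk_one dist_pi_const_le).isBounded_image hbdd)
  refine ⟨x₀, fun x => ?_⟩
  simp only [penalizedSum, sum_inner_transpose_mul_self_smul]
  exact hx₀ x

lemma hasLineDerivAt_sum_inner_matrix_smul {Q : Matrix ι ι ℝ} (hQ : Q.IsSymm) (x u : ι → E) :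
    HasLineDerivAt ℝ (fun y : ι → E => ∑ i, ⟪y i, (Q • y) i⟫) (2 * ∑ i, ⟪(Q • x) i, u i⟫) x u := by
  have hline : ∀ y v : E, HasDerivAt (fun t : ℝ => y + t • v) v 0 := fun y v =>
    (hasFDerivAt_id y).hasLineDerivAt v
  have hderiv := HasDerivAt.fun_sum fun i (_ : i ∈ Finset.univ) =>
    (hline (x i) (u i)).inner ℝ (hline ((Q • x) i) ((Q • u) i))
  have hvalue : ∑ i, (⟪x i, (Q • u) i⟫ + ⟪u i, (Q • x) i⟫) = 2 * ∑ i, ⟪(Q • x) i, u i⟫ := by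
    rw [Finset.sum_add_distrib, sum_inner_matrix_smul_right, hQ.eq, two_mul]
    simp only [real_inner_comm]
  simpa only [HasLineDerivAt, ← hvalue, smul_add, smul_comm Q, Pi.add_apply, Pi.smul_apply,
    zero_smul, add_zero] using hderiv

lemma hasLineDerivAt_penalizedSum [CompleteSpace E] {f : ι → E → ℝ} {g x : ι → E}
    (hf : ∀ i, HasGradientAt (f i) (g i) (x i)) (c : ℝ) {Q : Matrix ι ι ℝ} (hQ : Q.IsSymm)
    (u : ι → E) :
    HasLineDerivAt ℝ (penalizedSum f c Q)
      (∑ i, ⟪(g + (2 * c) • (Q • x)) i, u i⟫) x u := by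
  have hsum : HasLineDerivAt ℝ (fun y : ι → E => ∑ i, f i (y i)) (∑ i, ⟪g i, u i⟫) x u :=
    HasDerivAt.fun_sum fun i _ => (hf i).hasFDerivAt.hasLineDerivAt (u i)
  have hvalue : ∑ i, ⟪(g + (2 * c) • (Q • x)) i, u i⟫ =
      ∑ i, ⟪g i, u i⟫ + c * (2 * ∑ i, ⟪(Q • x) i, u i⟫) := by
    simp only [Pi.add_apply, Pi.smul_apply, inner_add_left, real_inner_smul_left,
      Finset.sum_add_distrib, ← Finset.mul_sum]
    ring
  rw [hvalue]
  exact HasDerivAt.add hsum (HasDerivAt.const_mul c (hasLineDerivAt_sum_inner_matrix_smul hQ x u))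

theorem gradient_add_smul_eq_zero_of_forall_penalizedSum_le [CompleteSpace E] {f : ι → E → ℝ}
    {g x₀ : ι → E} (hf : ∀ i, HasGradientAt (f i) (g i) (x₀ i)) {c : ℝ} {Q : Matrix ι ι ℝ}
    (hQ : Q.IsSymm) (hx₀ : ∀ x, penalizedSum f c Q x₀ ≤ penalizedSum f c Q x) :
    g + (2 * c) • (Q • x₀) = 0 := by
  set u : ι → E := g + (2 * c) • (Q • x₀)
  have hmin : IsLocalMin (penalizedSum f c Q) x₀ := Filter.Eventually.of_forall hx₀
  have hzero : ∑ i, ⟪u i, u i⟫ = 0 :=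
    hmin.hasLineDerivAt_eq_zero (hasLineDerivAt_penalizedSum hf c hQ u)
  rw [Finset.sum_eq_zero_iff_of_nonneg fun i _ => real_inner_self_nonneg] at hzero
  exact funext fun i => inner_self_eq_zero.1 (hzero i (Finset.mem_univ i))

theorem eq_matrix_smul_sub_of_forall_penalizedSum_le [CompleteSpace E] {W : Matrix ι ι ℝ}
    (hW : W.IsSymm) (hdet : IsUnit W.det) {f : ι → E → ℝ} {g x₀ : ι → E}
    (hf : ∀ i, HasGradientAt (f i) (g i) (x₀ i)) {α : ℝ} (hα : α ≠ 0)
    (hx₀ : ∀ x, penalizedSum f (1 / (2 * α)) (W⁻¹ - 1) x₀ ≤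
      penalizedSum f (1 / (2 * α)) (W⁻¹ - 1) x) :
    x₀ = W • (x₀ - α • g) := by
  have hsymm : (W⁻¹ - 1).IsSymm := by
    rw [Matrix.IsSymm, Matrix.transpose_sub, Matrix.transpose_nonsing_inv, hW.eq,
      Matrix.transpose_one]
  have hstat : α • g = -((W⁻¹ - 1) • x₀) := by
    have := congrArg (α • ·) (gradient_add_smul_eq_zero_of_forall_penalizedSum_le hf hsymm hx₀)
    have hcoef : α * (2 * (1 / (2 * α))) = 1 := by field_simp
    simp only [smul_add, smul_zero, smul_smul α, hcoef, one_smul] at this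
    exact eq_neg_of_add_eq_zero_left this
  rw [hstat, sub_neg_eq_add, sub_smul, one_smul, add_sub_cancel, smul_smul,
    Matrix.mul_nonsing_inv _ hdet, one_smul]

end PenalizedSum

section MixingMatrix

open scoped Matrix Matrix.Module

variable {ι E : Type*} [Fintype ι]

lemma sum_sub_mean_eq_zero [AddCommGroup E] [Module ℝ E] (x : ι → E) :
    ∑ i, (x i - (Fintype.card ι : ℝ)⁻¹ • ∑ j, x j) = 0 := by
  cases isEmpty_or_nonempty ι
  · simp
  · simp [Finset.sum_sub_distrib, ← Nat.cast_smul_eq_nsmul ℝ, smul_smul]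

/-- The quadratic form of `W` lies strictly below the identity on the orthogonal complement `𝟙^⊥`
of the consensus line: for symmetric `W`, every eigenvalue of `W` on `𝟙^⊥` is less than `1`. -/
def HasConsensusGap (W : Matrix ι ι ℝ) : Prop :=
  ∀ v : ι → ℝ, ∑ i, v i = 0 → v ≠ 0 → v ⬝ᵥ W *ᵥ v < v ⬝ᵥ v

lemma hasConsensusGap_of_sqrt_le {W : Matrix ι ι ℝ} {β : ℝ} (hβ : β < 1)
    (hW : ∀ v : ι → ℝ, ∑ i, v i = 0 →
      √(∑ i, (∑ j, W i j * v j) ^ 2) ≤ β * √(∑ i, v i ^ 2)) :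
    HasConsensusGap W := by
  intro v hsum hv
  have hpos : 0 < ‖WithLp.toLp 2 v‖ := by simpa using hv
  have hcontr : ‖WithLp.toLp 2 (W *ᵥ v)‖ ≤ β * ‖WithLp.toLp 2 v‖ := by
    simpa [EuclideanSpace.norm_eq, Matrix.mulVec, dotProduct] using hW v hsum
  calc v ⬝ᵥ W *ᵥ v = ⟪WithLp.toLp 2 (W *ᵥ v), WithLp.toLp 2 v⟫ := by
        simp [EuclideanSpace.inner_toLp_toLp]
    _ ≤ ‖WithLp.toLp 2 (W *ᵥ v)‖ * ‖WithLp.toLp 2 v‖ := real_inner_le_norm _ _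
    _ ≤ β * ‖WithLp.toLp 2 v‖ * ‖WithLp.toLp 2 v‖ := by gcongr
    _ < ‖WithLp.toLp 2 v‖ ^ 2 := by nlinarith [pow_pos hpos 2]
    _ = v ⬝ᵥ v := by simp [EuclideanSpace.real_norm_sq_eq, dotProduct, ← sq]

variable [DecidableEq ι] {W : Matrix ι ι ℝ}

lemma HasConsensusGap.posSemidef_one_sub (hgap : HasConsensusGap W) (hW : W.IsSymm)
    (hWone : ∀ i, ∑ j, W i j = 1) : (1 - W).PosSemidef := by
  have hsymm : (1 - W)ᵀ = 1 - W := by rw [Matrix.transpose_sub, Matrix.transpose_one, hW.eq]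
  refine .of_dotProduct_mulVec_nonneg (by simpa [Matrix.IsHermitian] using hsymm) fun v => ?_
  obtain ⟨m, w, hw, rfl⟩ : ∃ (m : ℝ) (w : ι → ℝ), ∑ i, w i = 0 ∧ v = m • 1 + w :=
    ⟨(Fintype.card ι : ℝ)⁻¹ • ∑ j, v j, _, sum_sub_mean_eq_zero v, by ext; simp⟩
  have hone : (1 - W) *ᵥ 1 = 0 := by
    have hfix : W *ᵥ 1 = 1 := by
      ext i
      simp [Matrix.mulVec, dotProduct, hWone]
    rw [Matrix.sub_mulVec, Matrix.one_mulVec, hfix, sub_self]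
  have hform : star (m • 1 + w) ⬝ᵥ (1 - W) *ᵥ (m • 1 + w) = w ⬝ᵥ w - w ⬝ᵥ W *ᵥ w := by
    have hleft : (1 : ι → ℝ) ⬝ᵥ (1 - W) *ᵥ w = 0 := by
      rw [Matrix.dotProduct_mulVec, ← Matrix.mulVec_transpose, hsymm, hone, zero_dotProduct]
    rw [star_trivial, Matrix.mulVec_add, Matrix.mulVec_smul, hone, smul_zero, zero_add,
      add_dotProduct, smul_dotProduct, hleft, smul_zero, zero_add, Matrix.sub_mulVec,
      Matrix.one_mulVec, dotProduct_sub]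
  rw [hform, sub_nonneg]
  rcases eq_or_ne w 0 with rfl | hw0
  · simp
  · exact (hgap w hw hw0).le

lemma posSemidef_inv_sub_one (hW : W.PosDef) (hle : (1 - W).PosSemidef) :
    (W⁻¹ - 1).PosSemidef := by
  have hdet : IsUnit W.det := hW.det_pos.ne'.isUnit
  have hherm : (W⁻¹ - 1)ᴴ = W⁻¹ - 1 := (hW.isHermitian.inv.sub Matrix.isHermitian_one).eq
  have hsplit : W⁻¹ - 1 = (1 - W) + (W⁻¹ - 1)ᴴ * W * (W⁻¹ - 1) := by
    rw [hherm, sub_mul, Matrix.nonsing_inv_mul _ hdet, one_mul, sub_mul, mul_sub W,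
      Matrix.mul_nonsing_inv _ hdet, one_mul, mul_one]
    abel
  rw [hsplit]
  exact hle.add (hW.posSemidef.conjTranspose_mul_mul_same _)

variable [NormedAddCommGroup E] [InnerProductSpace ℝ E]

lemma HasConsensusGap.eq_zero_of_smul_eq_self (hgap : HasConsensusGap W) {x : ι → E}
    (hsum : ∑ i, x i = 0) (hx : W • x = x) : x = 0 := by
  ext i
  refine ext_inner_right ℝ fun y => ?_
  have hfix : W *ᵥ (fun i => ⟪x i, y⟫) = fun i => ⟪x i, y⟫ := by
    ext j
    conv_rhs => rw [← hx]
    simp [Matrix.mulVec, dotProduct, sum_inner, real_inner_smul_left]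
  have hzero : (fun i => ⟪x i, y⟫) = 0 := by
    by_contra hne
    have := hgap _ (by rw [← sum_inner, hsum, inner_zero_left]) hne
    rw [hfix] at this
    exact lt_irrefl _ this
  simpa using congrFun hzero i

lemma HasConsensusGap.smul_eq_self_iff (hgap : HasConsensusGap W)
    (hWone : ∀ i, ∑ j, W i j = 1) (x : ι → E) :
    W • x = x ↔ ∃ z, x = fun _ => z := by
  have hconst : ∀ z : E, W • (fun _ : ι => z) = fun _ => z := fun z => by
    simp only [matrix_smul_const, hWone, one_smul]
  refine ⟨fun hx => ⟨(Fintype.card ι : ℝ)⁻¹ • ∑ j, x j, ?_⟩, ?_⟩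
  · refine sub_eq_zero.1 (hgap.eq_zero_of_smul_eq_self (sum_sub_mean_eq_zero x) ?_)
    rw [smul_sub, hx, hconst]
  · rintro ⟨z, rfl⟩
    exact hconst z

theorem stmt15_general [FiniteDimensional ℝ E] [CompleteSpace E] (hW : W.PosDef)
    (hWone : ∀ i, ∑ j, W i j = 1) (hgap : HasConsensusGap W) {f : ι → E → ℝ} {f' : ι → E → E}
    (hgrad : ∀ i x, HasGradientAt (f i) (f' i x) x) (hf : ∀ i, ConvexOn ℝ Set.univ (f i))
    (hne : {z | ∀ y, ∑ i, f i z ≤ ∑ i, f i y}.Nonempty)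
    (hbdd : Bornology.IsBounded {z | ∀ y, ∑ i, f i z ≤ ∑ i, f i y}) {α : ℝ} (hα : 0 < α) :
    (∃ x : ι → E, ∀ i, x i = ∑ j, W i j • (x j - α • f' j (x j))) ∧
      ∃ x₀ : ι → E, ∀ x : ι → E,
        ∑ i, f i (x₀ i) + 1 / (2 * α) * ∑ i, ⟪x₀ i, ∑ j, (W⁻¹ - 1) i j • x₀ j⟫ ≤
          ∑ i, f i (x i) + 1 / (2 * α) * ∑ i, ⟪x i, ∑ j, (W⁻¹ - 1) i j • x j⟫ := by
  have hdet : IsUnit W.det := hW.det_pos.ne'.isUnit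
  have hsymm : W.IsSymm := by
    simpa [Matrix.IsHermitian, Matrix.IsSymm] using hW.isHermitian
  have hpsd : (W⁻¹ - 1).PosSemidef :=
    posSemidef_inv_sub_one hW (hgap.posSemidef_one_sub hsymm hWone)
  have hker : ∀ x : ι → E, (W⁻¹ - 1) • x = 0 ↔ ∃ z, x = fun _ => z := fun x =>
    (inv_sub_one_smul_eq_zero_iff hdet x).trans (hgap.smul_eq_self_iff hWone x)
  obtain ⟨x₀, hx₀⟩ := exists_forall_penalizedSum_le hf (c := 1 / (2 * α)) (by positivity) hpsd
    hker hne hbdd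
  have hfix : x₀ = W • (x₀ - α • fun i => f' i (x₀ i)) :=
    eq_matrix_smul_sub_of_forall_penalizedSum_le hsymm hdet (fun i => hgrad i (x₀ i)) hα.ne' hx₀
  exact ⟨⟨x₀, congrFun hfix⟩, x₀, hx₀⟩

end MixingMatrix

/-- **Lemma 3, existence part.** For convex `Lᵢ`-smooth `fᵢ` bounded
below, a nonempty bounded optimal set of `min_z ∑ᵢ fᵢ(z)`, and `W` symmetric,
nonnegative, stochastic, and positive definite with spectral bound `β ∈ [0,1)` on
`𝟙^⊥`, the DGD-ATC map `T(x) = 𝐖(x − α∇f(x))` has a fixed point for every `α > 0`;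
equivalently, `x ↦ ∑ᵢ fᵢ(xᵢ) + (1/(2α))⟨x,(𝐖⁻¹ − I)x⟩` attains its minimum. -/
theorem stmt15 (n d : ℕ) (hn : 0 < n)
    (W : Matrix (Fin n) (Fin n) ℝ)
    (hWsymm : W.IsSymm)
    (hWnonneg : ∀ i j, 0 ≤ W i j)
    (hWstoch : ∀ i, ∑ j, W i j = 1)
    (hWpd : W.PosDef)
    (β : ℝ) (hβ0 : 0 ≤ β) (hβ1 : β < 1)
    (hWspec : ∀ v : Fin n → ℝ, (∑ i, v i) = 0 →
      Real.sqrt (∑ i, (∑ j, W i j * v j) ^ 2) ≤ β * Real.sqrt (∑ i, v i ^ 2))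
    (f : Fin n → EuclideanSpace ℝ (Fin d) → ℝ)
    (f' : Fin n → EuclideanSpace ℝ (Fin d) → EuclideanSpace ℝ (Fin d))
    (hgrad : ∀ i x, HasGradientAt (f i) (f' i x) x)
    (hfconv : ∀ i, ConvexOn ℝ Set.univ (f i))
    (L : Fin n → ℝ)
    (hlip : ∀ i x y, ‖f' i x - f' i y‖ ≤ L i * ‖x - y‖)
    (hfbdd : ∀ i, BddBelow (Set.range (f i)))
    -- the optimal solution set of the consensus problem is nonempty and bounded
    (hopt_ne : {z : EuclideanSpace ℝ (Fin d) |
      ∀ y, (∑ i, f i z) ≤ ∑ i, f i y}.Nonempty)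
    (hopt_bdd : Bornology.IsBounded {z : EuclideanSpace ℝ (Fin d) |
      ∀ y, (∑ i, f i z) ≤ ∑ i, f i y}) :
    ∀ α : ℝ, 0 < α →
      (∃ xstar : Fin n → EuclideanSpace ℝ (Fin d),
        ∀ i, xstar i = ∑ j, W i j • (xstar j - α • f' j (xstar j))) ∧
      (∃ x₀ : Fin n → EuclideanSpace ℝ (Fin d),
        ∀ x : Fin n → EuclideanSpace ℝ (Fin d),
          (∑ i, f i (x₀ i)) + 1 / (2 * α) * ∑ i, ⟪x₀ i, ∑ j, (W⁻¹ - 1) i j • x₀ j⟫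
            ≤ (∑ i, f i (x i)) + 1 / (2 * α) * ∑ i, ⟪x i, ∑ j, (W⁻¹ - 1) i j • x j⟫) := by
  exact fun _ => stmt15_general hWpd hWstoch (hasConsensusGap_of_sqrt_le hβ1 hWspec)
    hgrad hfconv hopt_ne hopt_bdd
end

section
/- (Theorem 4, total asynchrony for DGD-ATC.) Let W ∈ ℝ^{n×n} be symmetric, entrywise nonnegative, stochastic, and positive definite; let each f_i : ℝ^d → ℝ be μ_i-strongly convex with L_i-Lipschitz gradient; and let 0 < α < 2/max_i L_i. Consider iterates x^k ∈ (ℝ^d)^n, activation sets K_i ⊆ ℕ, and delay indices s_{ij}^k ∈ {0,…,k} with s_{ii}^k = k, satisfying the asynchronous DGD-ATC recursion: for k ∈ K_i, x_i^{k+1} = Σ_j w_{ij}( x_j^{s_{ij}^k} − α∇f_j(x_j^{s_{ij}^k}) ), and x_i^{k+1} = x_i^k for k ∉ K_i. Assume total asynchrony: each K_i is infinite and lim_{k→∞} s_{ij}^k = +∞ for all i and j with w_{ij} > 0. Then (x^k) converges to the unique point x* satisfying x*_i = Σ_j w_{ij}( x*_j − α∇f_j(x*_j) ) for all i. -/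
open scoped RealInnerProductSpace
open Filter

/-!
The gradient of an `L`-smooth convex function is cocoercive (Baillon–Haddad), so under strong
convexity a gradient step of length `α < 2 / L` contracts the norm. Averaging the coordinates
with weights of total mass at most one cannot increase the supremum of the block norms, hence the
DGD-ATC operator is a contraction for that supremum norm. Its balls are products of balls of the
blocks, and product sets are what asynchrony respects: once every block has entered a product set
`A` for good, all sufficiently late updates use only data from `A`, so after one such update each
block stays in the factor of any product set that receives the image of `A`. Applying this to the
balls of radius `q ^ m * C` around the fixed point gives convergence.
-/

section Gradient

variable {E : Type*} [NormedAddCommGroup E] [InnerProductSpace ℝ E]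

lemma inner_add_smul_le_of_inner_sub_le {g : E → E} {c : ℝ}
    (hg : ∀ x y, ⟪g x - g y, x - y⟫ ≤ c * ‖x - y‖ ^ 2) (x v : E) {t : ℝ} (ht : 0 ≤ t) :
    ⟪g (x + t • v), v⟫ ≤ ⟪g x, v⟫ + c * t * ‖v‖ ^ 2 := by
  rcases ht.eq_or_lt with rfl | ht
  · simp
  · have scaled : t * (⟪g (x + t • v), v⟫ - ⟪g x, v⟫) ≤ t * (c * t * ‖v‖ ^ 2) := by
      have h := hg (x + t • v) x
      rw [add_sub_cancel_left, inner_smul_right, inner_sub_left, norm_smul, mul_pow,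
        Real.norm_eq_abs, sq_abs] at h
      linarith
    linarith [le_of_mul_le_mul_left scaled ht]

variable [CompleteSpace E] {f : E → ℝ} {g : E → E}

lemma hasDerivAt_comp_add_smul {f' x v : E} {t : ℝ} (hf : HasGradientAt f f' (x + t • v)) :
    HasDerivAt (fun t : ℝ => f (x + t • v)) ⟪f', v⟫ t := by
  have line : HasDerivAt (fun t : ℝ => x + t • v) v t := by
    simpa using ((hasDerivAt_id t).smul_const v).const_add x
  exact hf.hasFDerivAt.comp_hasDerivAt t line

lemma le_add_inner_add_of_inner_sub_le {c : ℝ} (hf : ∀ x, HasGradientAt f (g x) x)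
    (hg : ∀ x y, ⟪g x - g y, x - y⟫ ≤ c * ‖x - y‖ ^ 2) (x y : E) :
    f y ≤ f x + ⟪g x, y - x⟫ + c / 2 * ‖y - x‖ ^ 2 := by
  set v := y - x with hv
  let parabola : ℝ → ℝ := fun t => f x + t * ⟪g x, v⟫ + c / 2 * t ^ 2 * ‖v‖ ^ 2
  have deriv_f (t : ℝ) : HasDerivAt (fun t : ℝ => f (x + t • v)) ⟪g (x + t • v), v⟫ t :=
    hasDerivAt_comp_add_smul (hf _)
  have deriv_parabola (t : ℝ) : HasDerivAt parabola (⟪g x, v⟫ + c * t * ‖v‖ ^ 2) t := by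
    refine ((((hasDerivAt_id t).mul_const ⟪g x, v⟫).const_add (f x)).add
      ((((hasDerivAt_id t).pow 2).const_mul (c / 2)).mul_const (‖v‖ ^ 2))).congr_deriv ?_
    simp only [id_eq]
    ring
  have below : f (x + (1 : ℝ) • v) ≤ parabola 1 :=
    image_le_of_deriv_right_le_deriv_boundary
      (fun t _ => (deriv_f t).continuousAt.continuousWithinAt)
      (fun t _ => (deriv_f t).hasDerivWithinAt) (by simp [parabola])
      (fun t _ => (deriv_parabola t).continuousAt.continuousWithinAt)
      (fun t _ => (deriv_parabola t).hasDerivWithinAt)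
      (fun t ht => inner_add_smul_le_of_inner_sub_le hg x v ht.1)
      (Set.right_mem_Icc.2 zero_le_one)
  simpa [parabola, hv] using below

lemma add_inner_le_of_inner_sub_nonneg (hf : ∀ x, HasGradientAt f (g x) x)
    (hg : ∀ x y, 0 ≤ ⟪g x - g y, x - y⟫) (x y : E) :
    f x + ⟪g x, y - x⟫ ≤ f y := by
  have hf_neg (z : E) : HasGradientAt (fun z => -f z) (-g z) z := by
    rw [hasGradientAt_iff_hasFDerivAt, map_neg]
    exact (hf z).hasFDerivAt.neg
  have hg_neg (z w : E) : ⟪-g z - -g w, z - w⟫ ≤ 0 * ‖z - w‖ ^ 2 := by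
    rw [← neg_sub', inner_neg_left, zero_mul]
    exact neg_nonpos.2 (hg z w)
  have h := le_add_inner_add_of_inner_sub_le hf_neg hg_neg x y
  rw [inner_neg_left] at h
  linarith

-- Compares the upper bound at `x` with the lower bound at `y` in the point `x - L⁻¹ • (g x - g y)`,
-- the minimizer of the upper bound for `f - ⟪g y, ·⟫`.
lemma norm_sub_sq_div_le_bregman {L : ℝ} (hL : 0 < L) (hf : ∀ x, HasGradientAt f (g x) x)
    (hg_nonneg : ∀ x y, 0 ≤ ⟪g x - g y, x - y⟫)
    (hg_le : ∀ x y, ⟪g x - g y, x - y⟫ ≤ L * ‖x - y‖ ^ 2) (x y : E) :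
    ‖g x - g y‖ ^ 2 / (2 * L) ≤ f x - f y - ⟪g y, x - y⟫ := by
  set w := g x - g y with hw
  have upper : f (x - L⁻¹ • w) ≤ f x - L⁻¹ * ⟪g x, w⟫ + ‖w‖ ^ 2 / (2 * L) := by
    have h := le_add_inner_add_of_inner_sub_le hf hg_le x (x - L⁻¹ • w)
    rw [sub_sub_cancel_left, norm_neg, norm_smul, inner_neg_right, inner_smul_right, mul_pow,
      Real.norm_eq_abs, sq_abs] at h
    convert h using 1
    field_simp
    ring
  have lower : f y + ⟪g y, x - y⟫ - L⁻¹ * ⟪g y, w⟫ ≤ f (x - L⁻¹ • w) := by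
    have h := add_inner_le_of_inner_sub_nonneg hf hg_nonneg y (x - L⁻¹ • w)
    rw [sub_right_comm, inner_sub_right, inner_smul_right] at h
    linarith
  have gain : L⁻¹ * ⟪g x, w⟫ - L⁻¹ * ⟪g y, w⟫ = 2 * (‖w‖ ^ 2 / (2 * L)) := by
    rw [← mul_sub, ← inner_sub_left, ← hw, real_inner_self_eq_norm_sq]
    field_simp
  linarith

theorem norm_sub_sq_le_mul_inner_of_hasGradientAt {L : ℝ} (hL : 0 < L)
    (hf : ∀ x, HasGradientAt f (g x) x) (hg_nonneg : ∀ x y, 0 ≤ ⟪g x - g y, x - y⟫)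
    (hg_le : ∀ x y, ⟪g x - g y, x - y⟫ ≤ L * ‖x - y‖ ^ 2) (x y : E) :
    ‖g x - g y‖ ^ 2 ≤ L * ⟪g x - g y, x - y⟫ := by
  have bregman_xy := norm_sub_sq_div_le_bregman hL hf hg_nonneg hg_le x y
  have bregman_yx := norm_sub_sq_div_le_bregman hL hf hg_nonneg hg_le y x
  rw [norm_sub_rev, ← neg_sub x y, inner_neg_right] at bregman_yx
  rw [← div_le_iff₀' hL]
  calc ‖g x - g y‖ ^ 2 / L
      = ‖g x - g y‖ ^ 2 / (2 * L) + ‖g x - g y‖ ^ 2 / (2 * L) := by field_simp; norm_num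
    _ ≤ ⟪g x - g y, x - y⟫ := by rw [inner_sub_left]; linarith

lemma norm_gradient_step_sub_sq_le {L m α : ℝ} (hL : 0 < L) (hm : 0 ≤ m) (hα0 : 0 ≤ α)
    (hα1 : α * L ≤ 2) (hf : ∀ x, HasGradientAt f (g x) x)
    (hg_ge : ∀ x y, m * ‖x - y‖ ^ 2 ≤ ⟪g x - g y, x - y⟫)
    (hg_le : ∀ x y, ⟪g x - g y, x - y⟫ ≤ L * ‖x - y‖ ^ 2) (x y : E) :
    ‖(x - α • g x) - (y - α • g y)‖ ^ 2 ≤ (1 - α * (2 - α * L) * m) * ‖x - y‖ ^ 2 := by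
  have cocoercive : ‖g x - g y‖ ^ 2 ≤ L * ⟪g x - g y, x - y⟫ :=
    norm_sub_sq_le_mul_inner_of_hasGradientAt hL hf
      (fun z w => (by positivity : 0 ≤ m * ‖z - w‖ ^ 2).trans (hg_ge z w)) hg_le x y
  have hα : 0 ≤ α * (2 - α * L) := mul_nonneg hα0 (sub_nonneg.2 hα1)
  calc ‖(x - α • g x) - (y - α • g y)‖ ^ 2
      = ‖(x - y) - α • (g x - g y)‖ ^ 2 := by rw [sub_sub_sub_comm, smul_sub]
    _ = ‖x - y‖ ^ 2 - 2 * (α * ⟪g x - g y, x - y⟫) + α ^ 2 * ‖g x - g y‖ ^ 2 := by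
      rw [norm_sub_sq_real, inner_smul_right, norm_smul, mul_pow, Real.norm_eq_abs, sq_abs,
        real_inner_comm]
    _ ≤ ‖x - y‖ ^ 2 - 2 * (α * ⟪g x - g y, x - y⟫)
          + α ^ 2 * (L * ⟪g x - g y, x - y⟫) := by gcongr
    _ = ‖x - y‖ ^ 2 - α * (2 - α * L) * ⟪g x - g y, x - y⟫ := by ring
    _ ≤ ‖x - y‖ ^ 2 - α * (2 - α * L) * (m * ‖x - y‖ ^ 2) :=
      sub_le_sub_left (mul_le_mul_of_nonneg_left (hg_ge x y) hα) _
    _ = (1 - α * (2 - α * L) * m) * ‖x - y‖ ^ 2 := by ring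

theorem exists_contractingWith_gradient_step {L m α : ℝ} (hL : 0 < L) (hm : 0 < m) (hα0 : 0 < α)
    (hα1 : α < 2 / L) (hf : ∀ x, HasGradientAt f (g x) x)
    (hg_ge : ∀ x y, m * ‖x - y‖ ^ 2 ≤ ⟪g x - g y, x - y⟫)
    (hg_lip : ∀ x y, ‖g x - g y‖ ≤ L * ‖x - y‖) :
    ∃ q, ContractingWith q fun x => x - α • g x := by
  have hαL : α * L < 2 := (lt_div_iff₀ hL).1 hα1
  have hg_le (x y : E) : ⟪g x - g y, x - y⟫ ≤ L * ‖x - y‖ ^ 2 :=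
    calc ⟪g x - g y, x - y⟫ ≤ ‖g x - g y‖ * ‖x - y‖ := real_inner_le_norm _ _
      _ ≤ L * ‖x - y‖ * ‖x - y‖ := by gcongr; exact hg_lip x y
      _ = L * ‖x - y‖ ^ 2 := by ring
  set c : ℝ := 1 - α * (2 - α * L) * m
  have hc1 : c < 1 := sub_lt_self 1 (mul_pos (mul_pos hα0 (sub_pos.2 hαL)) hm)
  refine ⟨NNReal.sqrt c.toNNReal, ?_, LipschitzWith.of_dist_le_mul fun x y => ?_⟩
  · rwa [← NNReal.sqrt_one, NNReal.sqrt_lt_sqrt, Real.toNNReal_lt_one]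
  · rw [dist_eq_norm, dist_eq_norm]
    refine le_of_sq_le_sq ?_ (by positivity)
    calc ‖(x - α • g x) - (y - α • g y)‖ ^ 2
        ≤ c * ‖x - y‖ ^ 2 :=
          norm_gradient_step_sub_sq_le hL hm.le hα0.le hαL.le hf hg_ge hg_le x y
      _ ≤ c.toNNReal * ‖x - y‖ ^ 2 := by gcongr; exact Real.le_coe_toNNReal c
      _ = (NNReal.sqrt c.toNNReal * ‖x - y‖) ^ 2 := by
        rw [mul_pow, ← NNReal.coe_pow, NNReal.sq_sqrt]

end Gradient

section Mixing

lemma exists_lt_one_forall_lipschitzWith {ι : Type*} [Finite ι] {X : ι → Type*}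
    [∀ i, EMetricSpace (X i)] {φ : ∀ i, X i → X i} (hφ : ∀ i, ∃ q, ContractingWith q (φ i)) :
    ∃ q < 1, ∀ i, LipschitzWith q (φ i) := by
  cases nonempty_fintype ι
  choose q hq using hφ
  exact ⟨Finset.univ.sup q, (Finset.sup_lt_iff one_pos).2 fun i _ => (hq i).1,
    fun i => (hq i).2.weaken (Finset.le_sup (Finset.mem_univ i))⟩

variable {ι E : Type*} [Fintype ι] [NormedAddCommGroup E] [NormedSpace ℝ E]

/-- The map that applies `φ j` to each block `j` and then combines the results with the weights
`W i j`. The synchronous DGD-ATC operator is the case `φ j z = z - α • ∇f_j z`. -/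
def mixedMap (W : ι → ι → ℝ) (φ : ι → E → E) (u : ι → E) (i : ι) : E :=
  ∑ j, W i j • φ j (u j)

variable {W : ι → ι → ℝ} {φ : ι → E → E}

lemma dependsOn_mixedMap (i : ι) :
    DependsOn (fun u => mixedMap W φ u i) {j | W i j ≠ 0} := by
  intro u v huv
  refine Finset.sum_congr rfl fun j _ => ?_
  by_cases hj : W i j = 0
  · simp [hj]
  · rw [huv j hj]

lemma lipschitzWith_mixedMap {q : NNReal} (hW : ∀ i, ∑ j, |W i j| ≤ 1)
    (hφ : ∀ j, LipschitzWith q (φ j)) : LipschitzWith q (mixedMap W φ) := by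
  refine LipschitzWith.of_dist_le_mul fun u v => (dist_pi_le_iff (by positivity)).2 fun i => ?_
  calc dist (mixedMap W φ u i) (mixedMap W φ v i)
      ≤ ∑ j, dist (W i j • φ j (u j)) (W i j • φ j (v j)) := dist_sum_sum_le _ _ _
    _ ≤ ∑ j, |W i j| * (q * dist u v) := by
      gcongr with j
      rw [dist_smul₀, Real.norm_eq_abs]
      gcongr
      exact (hφ j).dist_le_mul_of_le (dist_le_pi_dist u v j)
    _ = (∑ j, |W i j|) * (q * dist u v) := (Finset.sum_mul _ _ _).symm
    _ ≤ q * dist u v := mul_le_of_le_one_left (by positivity) (hW i)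

end Mixing

section Asynchronous

variable {ι : Type*} {X : ι → Type*}

/-- `x` is an asynchronous run of the iteration of `T`: at time `k` the blocks `i` with `k ∈ K i`
are recomputed from the values of the blocks `j` at the times `s i j k`, none of them in the
future, and the remaining blocks are kept. -/
structure IsAsyncIteration (T : (∀ i, X i) → ∀ i, X i) (K : ι → Set ℕ) (s : ι → ι → ℕ → ℕ)
    (x : ℕ → ∀ i, X i) : Prop where
  delay_le : ∀ i j k, s i j k ≤ k
  update : ∀ i k, k ∈ K i → x (k + 1) i = T (fun j => x (s i j k) j) i
  keep : ∀ i k, k ∉ K i → x (k + 1) i = x k i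

/-- Total asynchrony: every block is updated infinitely often, and the data that block `i` uses
from each of its in-neighbors `j ∈ N i` become arbitrarily recent, with no bound on the delays. -/
structure IsTotallyAsync (N : ι → Set ι) (K : ι → Set ℕ) (s : ι → ι → ℕ → ℕ) : Prop where
  infinite : ∀ i, (K i).Infinite
  tendsto_delay : ∀ i, ∀ j ∈ N i, Tendsto (s i j) atTop atTop

namespace IsAsyncIteration

variable {T : (∀ i, X i) → ∀ i, X i} {N : ι → Set ι} {K : ι → Set ℕ} {s : ι → ι → ℕ → ℕ}
  {x : ℕ → ∀ i, X i}

lemma mem_pi_of_mapsTo (hx : IsAsyncIteration T K s x) {A : ∀ i, Set (X i)}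
    (hT : Set.MapsTo T (Set.univ.pi A) (Set.univ.pi A)) (h0 : x 0 ∈ Set.univ.pi A) (k : ℕ) :
    x k ∈ Set.univ.pi A := by
  induction k using Nat.strong_induction_on with
  | _ k ih =>
    cases k with
    | zero => exact h0
    | succ k =>
      intro i hi
      by_cases hk : k ∈ K i
      · rw [hx.update i k hk]
        exact hT (fun j hj => ih _ (Nat.lt_succ_of_le (hx.delay_le i j k)) j hj) i hi
      · rw [hx.keep i k hk]
        exact ih k k.lt_succ_self i hi

lemma eventually_mem_of_eventually_update_mem (hx : IsAsyncIteration T K s x) {i : ι}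
    (hK : (K i).Infinite) {B : Set (X i)} (hB : ∀ᶠ k in atTop, k ∈ K i → x (k + 1) i ∈ B) :
    ∀ᶠ k in atTop, x k i ∈ B := by
  obtain ⟨k₀, hk₀⟩ := eventually_atTop.1 hB
  obtain ⟨k₁, hk₁, hlt⟩ := hK.exists_gt k₀
  refine eventually_atTop.2 ⟨k₁ + 1, fun k hk => ?_⟩
  induction k, hk using Nat.le_induction with
  | base => exact hk₀ k₁ hlt.le hk₁
  | succ k hk ih =>
    by_cases hkK : k ∈ K i
    · exact hk₀ k (by lia) hkK
    · rwa [hx.keep i k hkK]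

variable [Finite ι]

lemma eventually_mem_pi_of_mapsTo (hx : IsAsyncIteration T K s x) (hs : IsTotallyAsync N K s)
    (hN : ∀ i, DependsOn (fun u => T u i) (N i)) {A B : ∀ i, Set (X i)}
    (hT : Set.MapsTo T (Set.univ.pi A) (Set.univ.pi B))
    (hA : ∀ᶠ k in atTop, x k ∈ Set.univ.pi A) : ∀ᶠ k in atTop, x k ∈ Set.univ.pi B := by
  obtain ⟨k₀, hk₀⟩ := eventually_atTop.1 hA
  suffices ∀ i, ∀ᶠ k in atTop, x k i ∈ B i by
    filter_upwards [eventually_all.2 this] with k hk i _ using hk i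
  intro i
  refine hx.eventually_mem_of_eventually_update_mem (hs.infinite i) ?_
  have recent : ∀ᶠ k in atTop, ∀ j ∈ N i, k₀ ≤ s i j k :=
    (eventually_all_finite (N i).toFinite).2 fun j hj =>
      (hs.tendsto_delay i j hj).eventually_ge_atTop k₀
  filter_upwards [recent] with k hk hkK
  -- Replacing `s i j k` by `max k₀ (s i j k)` only changes blocks on which `T · i` does not depend.
  have update_eq : x (k + 1) i = T (fun j => x (max k₀ (s i j k)) j) i := by
    rw [hx.update i k hkK]
    exact hN i fun j hj => by rw [max_eq_right (hk j hj)]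
  rw [update_eq]
  exact hT (fun j hj => hk₀ _ (le_max_left _ _) j hj) i (Set.mem_univ i)

theorem eventually_mem_pi (hx : IsAsyncIteration T K s x) (hs : IsTotallyAsync N K s)
    (hN : ∀ i, DependsOn (fun u => T u i) (N i)) {A : ℕ → ∀ i, Set (X i)}
    (hT : ∀ m, Set.MapsTo T (Set.univ.pi (A m)) (Set.univ.pi (A (m + 1))))
    (hA : ∀ i, A 1 i ⊆ A 0 i) (h0 : x 0 ∈ Set.univ.pi (A 0)) (m : ℕ) :
    ∀ᶠ k in atTop, x k ∈ Set.univ.pi (A m) := by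
  induction m with
  | zero =>
    exact .of_forall (hx.mem_pi_of_mapsTo ((hT 0).mono_right (Set.pi_mono fun i _ => hA i)) h0)
  | succ m ih => exact hx.eventually_mem_pi_of_mapsTo hs hN (hT m) ih

end IsAsyncIteration

theorem IsAsyncIteration.tendsto_of_contractingWith [Fintype ι] [∀ i, MetricSpace (X i)]
    {T : (∀ i, X i) → ∀ i, X i} {N : ι → Set ι} {K : ι → Set ℕ} {s : ι → ι → ℕ → ℕ}
    {x : ℕ → ∀ i, X i} (hx : IsAsyncIteration T K s x) (hs : IsTotallyAsync N K s)
    (hN : ∀ i, DependsOn (fun u => T u i) (N i)) {q : NNReal} (hT : ContractingWith q T)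
    {z : ∀ i, X i} (hz : Function.IsFixedPt T z) : Tendsto x atTop (nhds z) := by
  set C := dist (x 0) z
  have pi_ball (m : ℕ) : Set.univ.pi (fun i => Metric.closedBall (z i) (q ^ m * C)) =
      Metric.closedBall z (q ^ m * C) := (closedBall_pi z (by positivity)).symm
  have eventually_mem_ball (m : ℕ) : ∀ᶠ k in atTop, x k ∈ Metric.closedBall z (q ^ m * C) := by
    rw [← pi_ball]
    refine hx.eventually_mem_pi hs hN
      (A := fun m i => Metric.closedBall (z i) (q ^ m * C)) (fun m => ?_) (fun i => ?_) ?_ m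
    · rw [pi_ball, pi_ball, pow_succ', mul_assoc]
      simpa only [hz.eq] using hT.toLipschitzWith.mapsTo_closedBall z (q ^ m * C)
    · refine Metric.closedBall_subset_closedBall ?_
      rw [pow_zero, pow_one]
      exact mul_le_mul_of_nonneg_right (mod_cast hT.1.le) dist_nonneg
    · rw [pi_ball, Metric.mem_closedBall, pow_zero, one_mul]
  have radius_tendsto : Tendsto (fun m : ℕ => (q : ℝ) ^ m * C) atTop (nhds 0) := by
    simpa using (tendsto_pow_atTop_nhds_zero_of_lt_one q.2 (mod_cast hT.1)).mul_const C
  refine Metric.tendsto_nhds.2 fun ε hε => ?_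
  obtain ⟨m, hm⟩ := (radius_tendsto.eventually_lt_const hε).exists
  filter_upwards [eventually_mem_ball m] with k hk using (Metric.mem_closedBall.1 hk).trans_lt hm

end Asynchronous

theorem stmt17_general {ι E : Type*} [Fintype ι] [NormedAddCommGroup E] [InnerProductSpace ℝ E]
    [CompleteSpace E] (W : ι → ι → ℝ) (hW : ∀ i, ∑ j, |W i j| ≤ 1)
    (f : ι → E → ℝ) (f' : ι → E → E) (hgrad : ∀ i x, HasGradientAt (f i) (f' i x) x)
    (μ : ι → ℝ) (hμ : ∀ i, 0 < μ i)
    (hsc : ∀ i x y, μ i * ‖x - y‖ ^ 2 ≤ ⟪f' i x - f' i y, x - y⟫)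
    (L : ι → ℝ) (hL : ∀ i, 0 < L i)
    (hlip : ∀ i x y, ‖f' i x - f' i y‖ ≤ L i * ‖x - y‖)
    (α : ℝ) (hα0 : 0 < α) (hα1 : ∀ i, α < 2 / L i)
    (x : ℕ → ι → E) (K : ι → Set ℕ) (s : ι → ι → ℕ → ℕ) (hs_le : ∀ i j k, s i j k ≤ k)
    (hupd : ∀ i k, k ∈ K i →
      x (k + 1) i = ∑ j, W i j • (x (s i j k) j - α • f' j (x (s i j k) j)))
    (hkeep : ∀ i k, k ∉ K i → x (k + 1) i = x k i)
    (hKinf : ∀ i, (K i).Infinite)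
    (hstot : ∀ i j, W i j ≠ 0 → Tendsto (fun k => s i j k) atTop atTop) :
    ∃ xstar : ι → E,
      (∀ i, xstar i = ∑ j, W i j • (xstar j - α • f' j (xstar j))) ∧
      (∀ y : ι → E, (∀ i, y i = ∑ j, W i j • (y j - α • f' j (y j))) → y = xstar) ∧
      Tendsto x atTop (nhds xstar) := by
  obtain ⟨q, hq, hstep⟩ := exists_lt_one_forall_lipschitzWith fun i =>
    exists_contractingWith_gradient_step (hL i) (hμ i) hα0 (hα1 i) (hgrad i) (hsc i) (hlip i)
  let T : (ι → E) → ι → E := mixedMap W fun j z => z - α • f' j z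
  have hT : ContractingWith q T := ⟨hq, lipschitzWith_mixedMap hW hstep⟩
  have hx : IsAsyncIteration T K s x := ⟨hs_le, hupd, hkeep⟩
  refine ⟨hT.fixedPoint T, fun i => congrFun hT.fixedPoint_isFixedPt.symm i,
    fun y hy => hT.fixedPoint_unique (funext fun i => (hy i).symm), ?_⟩
  exact hx.tendsto_of_contractingWith ⟨hKinf, hstot⟩ dependsOn_mixedMap hT hT.fixedPoint_isFixedPt

/-- **Theorem 4, total asynchrony for DGD-ATC.** Under strong convexity,
smoothness, the delay-free step-size condition `0 < α < 2/maxᵢ Lᵢ`, `W` symmetric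
nonnegative stochastic positive definite, and total asynchrony, the asynchronous
DGD-ATC iterates converge to the unique fixed point of synchronous DGD-ATC. -/
theorem stmt17 (n d : ℕ) (hn : 0 < n)
    (W : Fin n → Fin n → ℝ)
    (hWsymm : ∀ i j, W i j = W j i)
    (hWnonneg : ∀ i j, 0 ≤ W i j)
    (hWstoch : ∀ i, ∑ j, W i j = 1)
    (hWpd : ∀ v : Fin n → ℝ, v ≠ 0 → 0 < ∑ i, v i * ∑ j, W i j * v j)
    (f : Fin n → EuclideanSpace ℝ (Fin d) → ℝ)
    (f' : Fin n → EuclideanSpace ℝ (Fin d) → EuclideanSpace ℝ (Fin d))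
    (hgrad : ∀ i x, HasGradientAt (f i) (f' i x) x)
    (μ : Fin n → ℝ) (hμ : ∀ i, 0 < μ i)
    (hsc : ∀ i x y, μ i * ‖x - y‖ ^ 2 ≤ ⟪f' i x - f' i y, x - y⟫)
    (L : Fin n → ℝ) (hL : ∀ i, 0 < L i)
    (hlip : ∀ i x y, ‖f' i x - f' i y‖ ≤ L i * ‖x - y‖)
    (α : ℝ) (hα0 : 0 < α) (hα1 : ∀ i, α < 2 / L i)
    -- the asynchronous iterates, activation sets, and delayed indices
    (x : ℕ → Fin n → EuclideanSpace ℝ (Fin d))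
    (K : Fin n → Set ℕ)
    (s : Fin n → Fin n → ℕ → ℕ)
    (hs_le : ∀ i j k, s i j k ≤ k)
    (hs_self : ∀ i k, s i i k = k)
    -- the asynchronous DGD-ATC recursion
    (hupd : ∀ i k, k ∈ K i →
      x (k + 1) i = ∑ j, W i j • (x (s i j k) j - α • f' j (x (s i j k) j)))
    (hkeep : ∀ i k, k ∉ K i → x (k + 1) i = x k i)
    -- total asynchrony
    (hKinf : ∀ i, (K i).Infinite)
    (hstot : ∀ i j, 0 < W i j → Tendsto (fun k => s i j k) atTop atTop) :
    ∃ xstar : Fin n → EuclideanSpace ℝ (Fin d),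
      (∀ i, xstar i = ∑ j, W i j • (xstar j - α • f' j (xstar j))) ∧
      (∀ y : Fin n → EuclideanSpace ℝ (Fin d),
        (∀ i, y i = ∑ j, W i j • (y j - α • f' j (y j))) → y = xstar) ∧
      Tendsto x atTop (nhds xstar) := by
  exact stmt17_general W (fun i => by simp only [abs_of_nonneg (hWnonneg i _), hWstoch i, le_rfl])
    f f' hgrad μ hμ hsc L hL hlip α hα0 hα1 x K s hs_le hupd hkeep hKinf
    fun i j hij => hstot i j ((hWnonneg i j).lt_of_ne' hij)
end
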